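/- Let 𝔤 be a Lie algebra over a field K and let 𝔦₀, 𝔦₁, 𝔦₂ be subspaces of 𝔤 that are each invariant under every Lie algebra automorphism of 𝔤. Then the set 𝔰 = {z ∈ 𝔦₀ : [z, w] ∈ 𝔦₂ for all w ∈ 𝔦₁} is also a subspace of 𝔤 invariant under every Lie algebra automorphism of 𝔤. -/

import Mathlib

/-- Proposition 1: the "relative centralizer" of one megaideal in another modulo a
third is again a megaideal. -/
theorem stmt0 {K L : Type*} [Field K] [LieRing L] [LieAlgebra K L]
    (i0 i1 i2 : Submodule K L)
    (h0 : ∀ e : L ≃ₗ⁅K⁆ L, ∀ x ∈ i0, e x ∈ i0)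
    (h1 : ∀ e : L ≃ₗ⁅K⁆ L, ∀ x ∈ i1, e x ∈ i1)
    (h2 : ∀ e : L ≃ₗ⁅K⁆ L, ∀ x ∈ i2, e x ∈ i2) :
    ∃ s : Submodule K L,
      (s : Set L) = {z : L | z ∈ i0 ∧ ∀ w ∈ i1, ⁅z, w⁆ ∈ i2} ∧
      ∀ e : L ≃ₗ⁅K⁆ L, ∀ x ∈ s, e x ∈ s := by
  refine ⟨{ carrier := {z : L | z ∈ i0 ∧ ∀ w ∈ i1, ⁅z, w⁆ ∈ i2}
            add_mem' := ?_
            zero_mem' := ?_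
            smul_mem' := ?_ }, rfl, ?_⟩
  · rintro a b ⟨ha, ha'⟩ ⟨hb, hb'⟩
    refine ⟨i0.add_mem ha hb, fun w hw => ?_⟩
    rw [add_lie]
    exact i2.add_mem (ha' w hw) (hb' w hw)
  · refine ⟨i0.zero_mem, fun w _ => ?_⟩
    rw [zero_lie]
    exact i2.zero_mem
  · rintro c a ⟨ha, ha'⟩
    refine ⟨i0.smul_mem c ha, fun w hw => ?_⟩
    rw [smul_lie]
    exact i2.smul_mem c (ha' w hw)
  · rintro e x ⟨hx, hx'⟩
    refine ⟨h0 e x hx, fun w hw => ?_⟩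
    have h := h2 e _ (hx' (e.symm w) (h1 e.symm w hw))
    rwa [LieEquiv.map_lie, LieEquiv.apply_symm_apply] at h
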